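/- arXiv:1004.1854 — 2 statements merged into one kernel-verified Lean document; each statement's English description precedes it below -/
import Mathlib

section
/- Consider a maximum effort game (every h_e nondecreasing). Then every pairwise equilibrium s satisfies w(s*) ≤ 2·w(s) for every state s*; i.e., the price of anarchy for pairwise equilibria in maximum effort games is at most 2. -/
open Finset

/-- A network contribution game on a finite simple undirected graph. -/
structure NCGame (V : Type) [Fintype V] [DecidableEq V] where
  /-- adjacency relation of the (simple, undirected) graph -/
  Adj : V → V → Prop
  adj_symm : ∀ u v, Adj u v → Adj v u
  adj_irrefl : ∀ v, ¬ Adj v v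
  /-- budget of each player -/
  B : V → ℝ
  B_nonneg : ∀ v, 0 ≤ B v
  /-- reward function of each edge; `f u v x y` is the reward of edge `(u,v)`
  when `u` contributes `x` and `v` contributes `y`. -/
  f : V → V → ℝ → ℝ → ℝ
  f_comm : ∀ u v x y, f u v x y = f v u x y
  f_symm : ∀ u v x y, f u v x y = f u v y x
  f_nonneg : ∀ u v x y, 0 ≤ x → 0 ≤ y → 0 ≤ f u v x y
  f_mono : ∀ u v y, 0 ≤ y → MonotoneOn (fun x => f u v x y) (Set.Ici 0)

variable {V : Type} [Fintype V] [DecidableEq V]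

/-- A state: `s v u` is the effort player `v` puts on the edge `(v,u)`.
It is valid if efforts are nonnegative, supported on edges, and within budget. -/
def validState (g : NCGame V) (s : V → V → ℝ) : Prop :=
  (∀ v u, 0 ≤ s v u) ∧ (∀ v u, ¬ g.Adj v u → s v u = 0) ∧
  (∀ v, ∑ u, s v u ≤ g.B v)

open Classical in
/-- utility of player `v` -/
noncomputable def util (g : NCGame V) (s : V → V → ℝ) (v : V) : ℝ :=
  ∑ u, if g.Adj v u then g.f v u (s v u) (s u v) else 0

/-- social welfare -/
noncomputable def welfare (g : NCGame V) (s : V → V → ℝ) : ℝ :=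
  ∑ v, util g s v

/-- Nash equilibrium: no unilateral improving deviation. -/
def IsNashEq (g : NCGame V) (s : V → V → ℝ) : Prop :=
  validState g s ∧
  ∀ v (t : V → ℝ), validState g (Function.update s v t) →
    util g (Function.update s v t) v ≤ util g s v

/-- Pairwise equilibrium: Nash and no bilateral improving deviation. -/
def IsPairwiseEq (g : NCGame V) (s : V → V → ℝ) : Prop :=
  IsNashEq g s ∧
  ∀ u v (tu tv : V → ℝ), u ≠ v →
    validState g (Function.update (Function.update s u tu) v tv) →
    ¬(util g s u < util g (Function.update (Function.update s u tu) v tv) u ∧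
      util g s v < util g (Function.update (Function.update s u tu) v tv) v)

/-- Strong equilibrium: no coalition has a joint deviation strictly improving
the utility of all its members. -/
def IsStrongEq (g : NCGame V) (s : V → V → ℝ) : Prop :=
  validState g s ∧
  ∀ (C : Finset V) (s' : V → V → ℝ), C.Nonempty → validState g s' →
    (∀ v, v ∉ C → s' v = s v) →
    ∃ v ∈ C, util g s' v ≤ util g s v

/-- class `C`: symmetric, nonnegative, nondecreasing, coordinate-convex. -/
def InClassC (f : ℝ → ℝ → ℝ) : Prop :=
  (∀ x y, 0 ≤ x → 0 ≤ y → 0 ≤ f x y) ∧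
  (∀ x y, f x y = f y x) ∧
  (∀ y, 0 ≤ y → MonotoneOn (fun x => f x y) (Set.Ici 0)) ∧
  (∀ y, 0 ≤ y → ConvexOn ℝ (Set.Ici 0) (fun x => f x y))

/-- class `C₀`: members of `C` vanishing when one argument is `0`. -/
def InClassC0 (f : ℝ → ℝ → ℝ) : Prop :=
  InClassC f ∧ ∀ x, 0 ≤ x → f x 0 = 0

/-- An edge is tight in `s` if both endpoints contribute `0` or their full budget. -/
def tightState (g : NCGame V) (s : V → V → ℝ) : Prop :=
  ∀ u v, g.Adj u v → s u v = 0 ∨ s u v = g.B u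

/-!
In a maximum effort game the reward of an edge equals the reward one of its endpoints would generate
by contributing alone, so the welfare of `sStar` is at most twice the sum over all players `v` of
what `v` would earn by playing `sStar v` while nobody else contributes. Rewards being monotone, `v`
earns at least as much by deviating to `sStar v` from an equilibrium `s`, hence also by staying in
`s`.
-/

namespace NCGame

/-- The reward of an edge is at most the sum of the rewards its two endpoints would each generate
alone; this is the trait of maximum effort games behind the factor `2`. The inequality is asked only
for edges and nonnegative efforts, the arguments of `f` that matter in a valid state. -/
def SubadditiveRewards (g : NCGame V) : Prop :=
  ∀ u v, g.Adj u v → ∀ x y, 0 ≤ x → 0 ≤ y → g.f u v x y ≤ g.f u v x 0 + g.f u v 0 y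

/-- The utility player `v` obtains from its strategy in `s` when nobody else contributes; it bounds
from below what `v` can secure by deviating to that strategy. -/
noncomputable def soloUtil (g : NCGame V) (s : V → V → ℝ) (v : V) : ℝ :=
  util g (Pi.single v (s v)) v

variable {g : NCGame V}

theorem subadditiveRewards_of_eq_max {h : V → V → ℝ → ℝ}
    (hmax : ∀ u v, g.Adj u v → ∀ x y, g.f u v x y = h u v (max x y)) :
    g.SubadditiveRewards := by
  intro u v huv x y hx hy
  have f_left_nonneg : 0 ≤ g.f u v x 0 := g.f_nonneg u v x 0 hx le_rfl
  have f_right_nonneg : 0 ≤ g.f u v 0 y := g.f_nonneg u v 0 y le_rfl hy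
  rcases le_total y x with hyx | hxy
  · have : g.f u v x y = g.f u v x 0 := by
      rw [hmax u v huv, hmax u v huv, max_eq_left hyx, max_eq_left hx]
    linarith
  · have : g.f u v x y = g.f u v 0 y := by
      rw [hmax u v huv, hmax u v huv, max_eq_right hxy, max_eq_right hy]
    linarith

theorem f_le_f (u v : V) {x x' y y' : ℝ} (hx : 0 ≤ x) (hy : 0 ≤ y) (hxx' : x ≤ x')
    (hyy' : y ≤ y') : g.f u v x y ≤ g.f u v x' y' :=
  calc g.f u v x y ≤ g.f u v x' y := g.f_mono u v y hy hx (hx.trans hxx') hxx'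
    _ = g.f u v y x' := g.f_symm u v x' y
    _ ≤ g.f u v y' x' := g.f_mono u v x' (hx.trans hxx') hy (hy.trans hyy') hyy'
    _ = g.f u v x' y' := g.f_symm u v y' x'

theorem util_mono {s t : V → V → ℝ} (hs : 0 ≤ s) (hst : s ≤ t) : util g s ≤ util g t := by
  intro v
  refine sum_le_sum fun u _ => ?_
  split_ifs
  · exact f_le_f v u (hs v u) (hs u v) (hst v u) (hst u v)
  · exact le_rfl

open Classical in
theorem soloUtil_eq_sum (s : V → V → ℝ) (v : V) :
    g.soloUtil s v = ∑ u, if g.Adj v u then g.f v u (s v u) 0 else 0 := by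
  refine sum_congr rfl fun u _ => if_ctx_congr Iff.rfl (fun hvu => ?_) fun _ => rfl
  have huv : u ≠ v := fun huv => g.adj_irrefl v (huv ▸ hvu)
  rw [Pi.single_eq_same, Pi.single_eq_of_ne huv, Pi.zero_apply]

theorem SubadditiveRewards.welfare_le_two_mul_sum_soloUtil (hg : g.SubadditiveRewards)
    {s : V → V → ℝ} (hs : 0 ≤ s) : welfare g s ≤ 2 * ∑ v, g.soloUtil s v := by
  classical
  let soloReward (v u : V) : ℝ := if g.Adj v u then g.f v u (s v u) 0 else 0
  have edge_le (v u : V) : (if g.Adj v u then g.f v u (s v u) (s u v) else 0) ≤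
      soloReward v u + soloReward u v := by
    by_cases hvu : g.Adj v u
    · simp only [soloReward, if_pos hvu, if_pos (g.adj_symm v u hvu)]
      rw [g.f_comm u v, g.f_symm v u (s u v)]
      exact hg v u hvu _ _ (hs v u) (hs u v)
    · have huv : ¬ g.Adj u v := fun huv => hvu (g.adj_symm u v huv)
      simp [soloReward, hvu, huv]
  calc welfare g s ≤ ∑ v, ∑ u, (soloReward v u + soloReward u v) :=
        sum_le_sum fun v _ => sum_le_sum fun u _ => edge_le v u
    _ = ∑ v, ∑ u, soloReward v u + ∑ v, ∑ u, soloReward u v := by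
        simp only [sum_add_distrib]
    _ = 2 * ∑ v, ∑ u, soloReward v u := by
        rw [sum_comm (f := fun v u => soloReward u v), two_mul]
    _ = 2 * ∑ v, g.soloUtil s v := by simp only [soloUtil_eq_sum, soloReward]

theorem soloUtil_le_util_update {s t : V → V → ℝ} (hs : 0 ≤ s) (ht : 0 ≤ t) (v : V) :
    g.soloUtil t v ≤ util g (Function.update s v (t v)) v := by
  have single_nonneg : (0 : V → V → ℝ) ≤ Pi.single v (t v) := Pi.single_nonneg.2 (ht v)
  have single_le_update : (Pi.single v (t v) : V → V → ℝ) ≤ Function.update s v (t v) :=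
    update_le_update_iff.2 ⟨le_rfl, fun u _ => hs u⟩
  exact util_mono single_nonneg single_le_update v

end NCGame

theorem validState.update {g : NCGame V} {s t : V → V → ℝ} (hs : validState g s)
    (ht : validState g t) (v : V) : validState g (Function.update s v (t v)) := by
  refine ⟨fun w => ?_, fun w => ?_, fun w => ?_⟩ <;> rcases eq_or_ne w v with rfl | hwv
  · simpa only [Function.update_self] using ht.1 w
  · simpa only [Function.update_of_ne hwv] using hs.1 w
  · simpa only [Function.update_self] using ht.2.1 w
  · simpa only [Function.update_of_ne hwv] using hs.2.1 w
  · simpa only [Function.update_self] using ht.2.2 w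
  · simpa only [Function.update_of_ne hwv] using hs.2.2 w

theorem IsNashEq.soloUtil_le_util {g : NCGame V} {s t : V → V → ℝ} (hs : IsNashEq g s)
    (ht : validState g t) (v : V) : g.soloUtil t v ≤ util g s v :=
  calc g.soloUtil t v ≤ util g (Function.update s v (t v)) v :=
        NCGame.soloUtil_le_util_update hs.1.1 ht.1 v
    _ ≤ util g s v := hs.2 v (t v) (hs.1.update ht v)

theorem max_effort_poa_le_two_general {g : NCGame V} (hg : g.SubadditiveRewards)
    {s : V → V → ℝ} (hs : IsNashEq g s) {sStar : V → V → ℝ} (hStar : validState g sStar) :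
    welfare g sStar ≤ 2 * welfare g s :=
  calc welfare g sStar ≤ 2 * ∑ v, g.soloUtil sStar v :=
        hg.welfare_le_two_mul_sum_soloUtil hStar.1
    _ ≤ 2 * ∑ v, util g s v := by
        gcongr with v
        exact hs.soloUtil_le_util hStar v
    _ = 2 * welfare g s := rfl

/-- in maximum effort games the price of anarchy for pairwise
equilibria is at most 2. -/
theorem max_effort_poa_le_two (g : NCGame V)
    (h : V → V → ℝ → ℝ)
    (hmax : ∀ u v, g.Adj u v → ∀ x y, g.f u v x y = h u v (max x y))
    (hmono : ∀ u v, g.Adj u v → MonotoneOn (h u v) (Set.Ici 0))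
    (s : V → V → ℝ) (hs : IsPairwiseEq g s)
    (sStar : V → V → ℝ) (hStar : validState g sStar) :
    welfare g sStar ≤ 2 * welfare g s :=
  max_effort_poa_le_two_general (NCGame.subadditiveRewards_of_eq_max hmax) hs.1 hStar
end

section
/- Let s* be a social optimum of a network contribution game (with arbitrary nonnegative, symmetric, nondecreasing reward functions). Then s* is a 2-approximate pairwise equilibrium: (i) no player can strictly increase its utility by a unilateral deviation from s*; and (ii) for every pair of adjacent players u, v and every bilateral deviation (s'_u, s'_v), it is not the case that both w_u(s'_u, s'_v, s*_{−u,v}) > 2·w_u(s*) and w_v(s'_u, s'_v, s*_{−u,v}) > 2·w_v(s*). -/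
open Finset

variable {V : Type} [Fintype V] [DecidableEq V]

/-!
Rewards are symmetric, so the edges meeting a coalition `C` contribute to the welfare twice the
total utility of `C`, minus the contribution of the edges inside `C`, which that utility already
counts at both ends. A deviation of `C` leaves all other edges unchanged, so at an optimum it cannot
increase this quantity. For a single player there are no inner edges and the bound is exact; in
general their contribution lies between `0` and the total utility of `C`, which costs a factor `2`.
-/

theorem sum_sum_add_sum_sum_eq_two_nsmul_of_symm {α M : Type*} [Fintype α] [DecidableEq α]
    [AddCommMonoid M] {r : α → α → M} (hr : ∀ a b, r a b = r b a) (C : Finset α) :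
    ∑ a, ∑ b, r a b + ∑ a ∈ C, ∑ b ∈ C, r a b =
      2 • ∑ a ∈ C, ∑ b, r a b + ∑ a ∈ Cᶜ, ∑ b ∈ Cᶜ, r a b := by
  have split_inner (D : Finset α) :
      ∑ a ∈ D, ∑ b, r a b = ∑ a ∈ D, ∑ b ∈ C, r a b + ∑ a ∈ D, ∑ b ∈ Cᶜ, r a b := by
    simp only [← sum_add_distrib, sum_add_sum_compl]
  have cross_symm : ∑ a ∈ Cᶜ, ∑ b ∈ C, r a b = ∑ a ∈ C, ∑ b ∈ Cᶜ, r a b := by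
    rw [sum_comm]
    simp only [hr]
  rw [← sum_add_sum_compl C, split_inner Cᶜ, cross_symm, two_nsmul, split_inner C]
  abel

namespace NCGame

variable {g : NCGame V} {s s' : V → V → ℝ} {C : Finset V}

open Classical in
/-- The reward that each endpoint of the pair `(u, v)` receives from it in the state `s`. It is
defined for all pairs, and `0` for those that are not edges, so that utilities and welfare become
sums over all players. -/
noncomputable def edgeReward (g : NCGame V) (s : V → V → ℝ) (u v : V) : ℝ :=
  if g.Adj u v then g.f u v (s u v) (s v u) else 0

theorem util_eq_sum_edgeReward (g : NCGame V) (s : V → V → ℝ) (v : V) :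
    util g s v = ∑ u, g.edgeReward s v u := rfl

theorem edgeReward_comm (g : NCGame V) (s : V → V → ℝ) (u v : V) :
    g.edgeReward s u v = g.edgeReward s v u := by
  have adj_comm : g.Adj u v ↔ g.Adj v u := ⟨g.adj_symm u v, g.adj_symm v u⟩
  rw [edgeReward, edgeReward, adj_comm, g.f_comm, g.f_symm]

theorem edgeReward_self (g : NCGame V) (s : V → V → ℝ) (v : V) : g.edgeReward s v v = 0 :=
  if_neg (g.adj_irrefl v)

theorem edgeReward_nonneg (hs : ∀ v u, 0 ≤ s v u) (u v : V) : 0 ≤ g.edgeReward s u v := by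
  unfold edgeReward
  split_ifs
  · exact g.f_nonneg _ _ _ _ (hs u v) (hs v u)
  · exact le_rfl

theorem edgeReward_congr {u v : V} (hu : s' u = s u) (hv : s' v = s v) :
    g.edgeReward s' u v = g.edgeReward s u v := by
  simp only [edgeReward, hu, hv]

theorem sum_sum_edgeReward_le_sum_util (hs : ∀ v u, 0 ≤ s v u) (C : Finset V) :
    ∑ u ∈ C, ∑ v ∈ C, g.edgeReward s u v ≤ ∑ u ∈ C, util g s u :=
  sum_le_sum fun u _ => sum_le_univ_sum_of_nonneg (edgeReward_nonneg hs u)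

theorem welfare_add_sum_sum_edgeReward (g : NCGame V) (s : V → V → ℝ) (C : Finset V) :
    welfare g s + ∑ u ∈ C, ∑ v ∈ C, g.edgeReward s u v =
      2 * ∑ u ∈ C, util g s u + ∑ u ∈ Cᶜ, ∑ v ∈ Cᶜ, g.edgeReward s u v := by
  simpa only [welfare, util_eq_sum_edgeReward, nsmul_eq_mul, Nat.cast_ofNat] using
    sum_sum_add_sum_sum_eq_two_nsmul_of_symm (g.edgeReward_comm s) C

theorem welfare_sub_welfare_of_forall_notMem_eq (hagree : ∀ v ∉ C, s' v = s v) :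
    welfare g s' - welfare g s =
      (2 * ∑ u ∈ C, util g s' u - ∑ u ∈ C, ∑ v ∈ C, g.edgeReward s' u v) -
        (2 * ∑ u ∈ C, util g s u - ∑ u ∈ C, ∑ v ∈ C, g.edgeReward s u v) := by
  have outer_eq : ∑ u ∈ Cᶜ, ∑ v ∈ Cᶜ, g.edgeReward s' u v =
      ∑ u ∈ Cᶜ, ∑ v ∈ Cᶜ, g.edgeReward s u v :=
    sum_congr rfl fun u hu => sum_congr rfl fun v hv =>
      edgeReward_congr (hagree u (mem_compl.1 hu)) (hagree v (mem_compl.1 hv))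
  linarith [g.welfare_add_sum_sum_edgeReward s' C, g.welfare_add_sum_sum_edgeReward s C]

theorem welfare_update_sub_welfare (g : NCGame V) (s : V → V → ℝ) (v : V) (t : V → ℝ) :
    welfare g (Function.update s v t) - welfare g s =
      2 * (util g (Function.update s v t) v - util g s v) := by
  have hagree : ∀ u ∉ ({v} : Finset V), Function.update s v t u = s u :=
    fun u hu => Function.update_of_ne (notMem_singleton.1 hu) t s
  rw [welfare_sub_welfare_of_forall_notMem_eq hagree]
  simp only [sum_singleton, edgeReward_self]
  ring

theorem sum_util_le_two_mul_sum_util (hs : ∀ v u, 0 ≤ s v u) (hs' : ∀ v u, 0 ≤ s' v u)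
    (hagree : ∀ v ∉ C, s' v = s v) (hw : welfare g s' ≤ welfare g s) :
    ∑ v ∈ C, util g s' v ≤ 2 * ∑ v ∈ C, util g s v := by
  have inner_nonneg : 0 ≤ ∑ u ∈ C, ∑ v ∈ C, g.edgeReward s u v :=
    sum_nonneg fun u _ => sum_nonneg fun v _ => edgeReward_nonneg hs u v
  have inner_le : ∑ u ∈ C, ∑ v ∈ C, g.edgeReward s' u v ≤ ∑ u ∈ C, util g s' u :=
    sum_sum_edgeReward_le_sum_util hs' C
  linarith [welfare_sub_welfare_of_forall_notMem_eq (g := g) hagree]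

end NCGame

theorem optimum_is_two_approx_equilibrium_general (g : NCGame V)
    (sStar : V → V → ℝ) (hval : validState g sStar)
    (hopt : ∀ s', validState g s' → welfare g s' ≤ welfare g sStar) :
    IsNashEq g sStar ∧
    ∀ (C : Finset V) (s' : V → V → ℝ), validState g s' → (∀ v ∉ C, s' v = sStar v) →
      ∑ v ∈ C, util g s' v ≤ 2 * ∑ v ∈ C, util g sStar v := by
  refine ⟨⟨hval, fun v t ht => ?_⟩, fun C s' hs' hagree => ?_⟩
  · linarith [hopt _ ht, g.welfare_update_sub_welfare sStar v t]
  · exact NCGame.sum_util_le_two_mul_sum_util hval.1 hs'.1 hagree (hopt s' hs')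

/-- a social optimum is a 2-approximate pairwise equilibrium:
no unilateral deviation improves a player's utility, and no bilateral deviation
of adjacent players more than doubles both their utilities. -/
theorem optimum_is_two_approx_equilibrium (g : NCGame V)
    (sStar : V → V → ℝ) (hval : validState g sStar)
    (hopt : ∀ s', validState g s' → welfare g s' ≤ welfare g sStar) :
    (∀ v (t : V → ℝ), validState g (Function.update sStar v t) →
      util g (Function.update sStar v t) v ≤ util g sStar v) ∧
    (∀ u v, g.Adj u v → ∀ (tu tv : V → ℝ),
      validState g (Function.update (Function.update sStar u tu) v tv) →
      ¬(2 * util g sStar u <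
          util g (Function.update (Function.update sStar u tu) v tv) u ∧
        2 * util g sStar v <
          util g (Function.update (Function.update sStar u tu) v tv) v)) := by
  obtain ⟨hnash, hcoalition⟩ := optimum_is_two_approx_equilibrium_general g sStar hval hopt
  refine ⟨hnash.2, fun u v _ tu tv ht ⟨hu, hv⟩ => (hcoalition {u, v} _ ht (by grind)).not_gt ?_⟩
  rw [mul_sum]
  exact sum_lt_sum_of_nonempty (insert_nonempty u {v}) (by simp [hu, hv])
end
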